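/- Let X be a locally compact metric space and suppose for every x ∈ X there is ε₀ > 0 such that for all ε < ε₀ the sphere ∂B(x,ε) is compact; if every pair of distinct points of X is separated by a closed set of ind ≤ D−1 (with separators coming from a family closed under intersecting with X), then ind(X) ≤ D via a finite-subcover argument: finitely many separators L₁,…,L_m suffice to separate x from the compact sphere ∂B(x,ε), and the resulting open set U ∋ x contained in B(x,ε) has frontier contained in L₁ ∪ … ∪ L_m, hence ind(∂U) ≤ D−1. -/

import Mathlib

universe u

/-- `IndLt n X` means the small inductive dimension of `X` is at most `n - 1`. -/
def IndLt : ℕ → (X : Type u) → [TopologicalSpace X] → Prop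
  | 0, X, _ => IsEmpty X
  | (n+1), X, _ => ∀ (p : X) (V : Set X), IsOpen V → p ∈ V →
      ∃ U : Set X, IsOpen U ∧ p ∈ U ∧ U ⊆ V ∧ IndLt n ↥(frontier U)

/-- `L` separates `x` from `y`: `L` is closed and the complement of `L` is a disjoint
union of open sets `W ∋ x` and `V ∋ y`. -/
def SeparatesPoints {X : Type u} [TopologicalSpace X] (L : Set X) (x y : X) : Prop :=
  IsClosed L ∧ ∃ W V : Set X, IsOpen W ∧ IsOpen V ∧ x ∈ W ∧ y ∈ V ∧
    W ∩ V = ∅ ∧ W ∪ V = Lᶜ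

open Set Topology

/-- Relative version of small inductive dimension, for subsets of an ambient space. -/
def RelInd {X : Type u} [TopologicalSpace X] : ℕ → Set X → Prop
  | 0, S => S = ∅
  | (n+1), S => ∀ p ∈ S, ∀ V : Set X, IsOpen V → p ∈ V →
      ∃ U W : Set X, IsOpen U ∧ IsOpen W ∧ Disjoint U W ∧ p ∈ U ∧ S \ V ⊆ W ∧
        RelInd n (S \ (U ∪ W))

theorem RelInd.mono {X : Type u} [TopologicalSpace X] {n : ℕ} :
    ∀ {S T : Set X}, RelInd n S → T ⊆ S → RelInd n T := by
  induction n with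
  | zero =>
    intro S T h hT
    simp only [RelInd] at *
    exact subset_empty_iff.1 (h ▸ hT)
  | succ n ih =>
    intro S T h hT p hp V hV hpV
    obtain ⟨U, W, hU, hW, hd, hpU, hSW, hr⟩ := h p (hT hp) V hV hpV
    exact ⟨U, W, hU, hW, hd, hpU, (sdiff_subset_sdiff_left hT).trans hSW,
      ih hr (sdiff_subset_sdiff_left hT)⟩

theorem RelInd.empty {X : Type u} [TopologicalSpace X] (n : ℕ) : RelInd n (∅ : Set X) := by
  cases n with
  | zero => simp [RelInd]
  | succ n => intro p hp; exact absurd hp (notMem_empty p)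

theorem RelInd.preimage {X Y : Type u} [TopologicalSpace X] [TopologicalSpace Y]
    {f : Y → X} (hf : IsInducing f) {n : ℕ} :
    ∀ {S : Set X}, RelInd n S → RelInd n (f ⁻¹' S) := by
  induction n with
  | zero =>
    intro S h
    simp only [RelInd] at *
    simp [h]
  | succ n ih =>
    intro S h p hp V hV hpV
    obtain ⟨V', hV', rfl⟩ := hf.isOpen_iff.1 hV
    obtain ⟨U, W, hU, hW, hd, hpU, hSW, hr⟩ := h (f p) hp V' hV' hpV
    refine ⟨f ⁻¹' U, f ⁻¹' W, hU.preimage hf.continuous, hW.preimage hf.continuous,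
      hd.preimage f, hpU, ?_, ih hr⟩
    intro y hy
    exact hSW hy

theorem relInd_of_indLt {X : Type u} [TopologicalSpace X] [T5Space X] {n : ℕ} :
    ∀ {Y : Type u} [TopologicalSpace Y] {f : Y → X}, IsEmbedding f → IndLt n Y →
      RelInd n (range f) := by
  induction n with
  | zero =>
    intro Y _ f hf h
    simp only [IndLt, RelInd] at *
    exact range_eq_empty f
  | succ n ih =>
    intro Y _ f hf h p hp V hV hpV
    obtain ⟨q, rfl⟩ := hp
    obtain ⟨V', ⟨hqV', hV'c⟩, hV'⟩ :=
      (closed_nhds_basis (f q)).mem_iff.1 (hV.mem_nhds hpV)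
    obtain ⟨U', hU', hqU', hU'V, hfr⟩ := h q (f ⁻¹' interior V')
      (isOpen_interior.preimage hf.continuous) (mem_interior_iff_mem_nhds.2 hqV')
    have h1 : Disjoint (closure (f '' U')) (f '' (closure U')ᶜ) := by
      rw [Set.disjoint_left]
      rintro _ hx ⟨y, hy, rfl⟩
      apply hy
      rw [hf.closure_eq_preimage_closure_image]
      exact hx
    have h2 : Disjoint (f '' U') (closure (f '' (closure U')ᶜ)) := by
      rw [Set.disjoint_left]
      rintro _ ⟨y, hy, rfl⟩ hx
      have : y ∈ closure (closure U')ᶜ := by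
        rw [hf.closure_eq_preimage_closure_image]
        exact hx
      obtain ⟨z, hz, hz'⟩ := mem_closure_iff.1 this U' hU' hy
      exact hz' (subset_closure hz)
    obtain ⟨U, W, hU, hW, hUU, hWW, hd⟩ :=
      separatedNhds_iff_disjoint.2 (CompletelyNormalSpace.completely_normal h1 h2)
    have hcl : closure U' ⊆ f ⁻¹' V' :=
      closure_minimal (hU'V.trans (preimage_mono interior_subset))
        (hV'c.preimage hf.continuous)
    refine ⟨U, W, hU, hW, hd, hUU ⟨q, hqU', rfl⟩, ?_, ?_⟩
    · rintro _ ⟨⟨y, rfl⟩, hy⟩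
      exact hWW ⟨y, fun hy' => hy (hV' (hcl hy')), rfl⟩
    · refine (ih (hf.comp IsEmbedding.subtypeVal) hfr).mono ?_
      rintro _ ⟨⟨y, rfl⟩, hy⟩
      refine ⟨⟨y, ?_⟩, rfl⟩
      rw [hU'.frontier_eq]
      refine ⟨?_, fun hy' => hy (Or.inl (hUU ⟨y, hy', rfl⟩))⟩
      by_contra hc
      exact hy (Or.inr (hWW ⟨y, hc, rfl⟩))

theorem indLt_of_relInd {X : Type u} [TopologicalSpace X] {n : ℕ} :
    ∀ {Y : Type u} [TopologicalSpace Y] {f : Y → X}, IsEmbedding f → RelInd n (range f) →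
      IndLt n Y := by
  induction n with
  | zero =>
    intro Y _ f hf h
    simp only [IndLt, RelInd] at *
    exact range_eq_empty_iff.1 h
  | succ n ih =>
    intro Y _ f hf h q V hV hqV
    obtain ⟨V', hV', rfl⟩ := hf.isInducing.isOpen_iff.1 hV
    obtain ⟨U, W, hU, hW, hd, hpU, hSW, hr⟩ := h (f q) ⟨q, rfl⟩ V' hV' hqV
    have hop : IsOpen (f ⁻¹' (U ∩ V')) := (hU.inter hV').preimage hf.continuous
    refine ⟨f ⁻¹' (U ∩ V'), hop, ⟨hpU, hqV⟩,
      preimage_mono inter_subset_right, ih (hf.comp IsEmbedding.subtypeVal) (hr.mono ?_)⟩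
    rintro _ ⟨⟨y, hy⟩, rfl⟩
    rw [hop.frontier_eq] at hy
    have hyW : f y ∉ W := by
      intro hyW
      obtain ⟨z, hz, hz'⟩ := mem_closure_iff.1 hy.1 _ (hW.preimage hf.continuous) hyW
      exact Set.disjoint_left.1 hd hz'.1 hz
    refine ⟨⟨y, rfl⟩, ?_⟩
    rintro (h1 | h1)
    · by_cases hv : f y ∈ V'
      · exact hy.2 ⟨h1, hv⟩
      · exact hyW (hSW ⟨⟨y, rfl⟩, hv⟩)
    · exact hyW h1

theorem RelInd.family {X : Type u} [TopologicalSpace X] [SecondCountableTopology X]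
    {n : ℕ} {A : Set X} (h : RelInd (n+1) A) :
    ∃ U W : ℕ → Set X, (∀ j, IsOpen (U j) ∧ IsOpen (W j) ∧ Disjoint (U j) (W j) ∧
      RelInd n (A \ (U j ∪ W j))) ∧
      ∀ p ∈ A, ∀ V : Set X, IsOpen V → p ∈ V → ∃ j, p ∈ U j ∧ A \ V ⊆ W j := by
  classical
  let Q : Set X × Set X → Prop := fun u => IsOpen u.1 ∧ IsOpen u.2 ∧ Disjoint u.1 u.2 ∧
      RelInd n (A \ (u.1 ∪ u.2))
  have hQ0 : Q (∅, univ) := by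
    refine ⟨isOpen_empty, isOpen_univ, by simp, ?_⟩
    simpa using RelInd.empty n
  let B := TopologicalSpace.countableBasis X
  have hB := TopologicalSpace.isBasis_countableBasis X
  have hBc : B.Countable := TopologicalSpace.countable_countableBasis X
  have : Countable B := hBc.to_subtype
  let R : B × B → Set X × Set X → Prop := fun b u => Q u ∧ b.1.1 ⊆ u.1 ∧ A \ b.2.1 ⊆ u.2
  let g : B × B → Set X × Set X := fun b =>
    if hb : ∃ u, R b u then hb.choose else (∅, univ)
  have hg1 : ∀ b, Q (g b) := by
    intro b
    by_cases hb : ∃ u, R b u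
    · simp only [g, dif_pos hb]
      exact hb.choose_spec.1
    · simp only [g, dif_neg hb]
      exact hQ0
  have hg2 : ∀ b, (∃ u, R b u) → R b (g b) := by
    intro b hb
    simp only [g, dif_pos hb]
    exact hb.choose_spec
  let s : Set (Set X × Set X) := insert (∅, univ) (range g)
  have hs : s.Countable := (countable_range g).insert _
  obtain ⟨e, he⟩ := hs.exists_eq_range ⟨_, mem_insert _ _⟩
  refine ⟨fun j => (e j).1, fun j => (e j).2, ?_, ?_⟩
  · intro j
    have : e j ∈ s := he ▸ mem_range_self j
    rcases this with h0 | ⟨b, hb⟩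
    · show Q (e j)
      rw [h0]; exact hQ0
    · show Q (e j)
      rw [← hb]; exact hg1 b
  · intro p hp V hV hpV
    obtain ⟨b2, hb2, hpb2, hb2V⟩ := hB.exists_subset_of_mem_open hpV hV
    obtain ⟨U, W, hU, hW, hd, hpU, hSW, hr⟩ := h p hp b2 (hB.isOpen hb2) hpb2
    obtain ⟨b1, hb1, hpb1, hb1U⟩ := hB.exists_subset_of_mem_open hpU hU
    have hR := hg2 (⟨b1, hb1⟩, ⟨b2, hb2⟩) ⟨(U, W), ⟨hU, hW, hd, hr⟩, hb1U, hSW⟩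
    have hm : g (⟨b1, hb1⟩, ⟨b2, hb2⟩) ∈ range e := he ▸ Or.inr (mem_range_self _)
    obtain ⟨j, hj⟩ := hm
    refine ⟨j, ?_, ?_⟩
    · simp only [hj]; exact hR.2.1 hpb1
    · simp only [hj]; exact (sdiff_subset_sdiff_right hb2V).trans hR.2.2

theorem exists_closed_nhd_disjoint {X : Type u} [TopologicalSpace X] [NormalSpace X]
    {E F : Set X} (hE : IsClosed E) (hF : IsClosed F) (hEF : Disjoint E F) :
    ∃ E' F' : Set X, IsClosed E' ∧ IsClosed F' ∧ Disjoint E' F' ∧ E ⊆ interior E' ∧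
      F ⊆ interior F' := by
  obtain ⟨U, hU, hEU, hUF⟩ := normal_exists_closure_subset hE hF.isOpen_compl
    (Set.disjoint_left.1 hEF)
  have : F ⊆ (closure U)ᶜ := fun x hx hx' => hUF hx' hx
  obtain ⟨V, hV, hFV, hVU⟩ := normal_exists_closure_subset hF isClosed_closure.isOpen_compl this
  exact ⟨closure U, closure V, isClosed_closure, isClosed_closure,
    Set.disjoint_left.2 fun x hx hx' => hVU hx' hx,
    hEU.trans (interior_maximal subset_closure hU),
    hFV.trans (interior_maximal subset_closure hV)⟩

theorem RelInd.separate {X : Type u} [TopologicalSpace X] [T5Space X]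
    [SecondCountableTopology X] {Z : Set X} (hZ : RelInd 1 Z) {E F : Set X}
    (hE : IsClosed E) (hF : IsClosed F) (hEF : Disjoint E F) :
    ∃ U W : Set X, IsOpen U ∧ IsOpen W ∧ Disjoint U W ∧ E ⊆ U ∧ F ⊆ W ∧ Z ⊆ U ∪ W := by
  classical
  obtain ⟨E', F', hE', hF', hd', hEE, hFF⟩ := exists_closed_nhd_disjoint hE hF hEF
  obtain ⟨U, W, hUW, hb⟩ := hZ.family
  have hcov : ∀ j, Z ⊆ U j ∪ W j := fun j => sdiff_eq_empty.1 (hUW j).2.2.2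
  let O : ℕ → Set X := fun j => U j ∩ ⋂ i ∈ Finset.range j,
    (if Disjoint (U i ∩ Z) E' ∨ Disjoint (U i ∩ Z) F' then W i else univ)
  have hO : ∀ j, IsOpen (O j) := by
    intro j
    refine (hUW j).1.inter (isOpen_biInter_finset ?_)
    intro i _
    split_ifs
    · exact (hUW i).2.1
    · exact isOpen_univ
  let J1 : Set ℕ := {j | Disjoint (U j ∩ Z) F'}
  let J2 : Set ℕ := {j | Disjoint (U j ∩ Z) E' ∧ ¬ Disjoint (U j ∩ Z) F'}
  have hlt : ∀ i j, i < j → (Disjoint (U i ∩ Z) E' ∨ Disjoint (U i ∩ Z) F') →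
      Disjoint (O i) (O j) := by
    intro i j hij hi
    rw [Set.disjoint_left]
    intro x hx hx'
    have := mem_iInter₂.1 hx'.2 i (Finset.mem_range.2 hij)
    rw [if_pos hi] at this
    exact Set.disjoint_left.1 (hUW i).2.2.1 hx.1 this
  let O1 : Set X := ⋃ j ∈ J1, O j
  let O2 : Set X := ⋃ j ∈ J2, O j
  have hO1 : IsOpen O1 := isOpen_biUnion fun j _ => hO j
  have hO2 : IsOpen O2 := isOpen_biUnion fun j _ => hO j
  have hO12 : Disjoint O1 O2 := by
    simp only [O1, O2, Set.disjoint_iUnion_left, Set.disjoint_iUnion_right]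
    intro j hj i hi
    rcases lt_trichotomy i j with h | h | h
    · exact hlt i j h (Or.inr hi)
    · subst h; exact absurd hi hj.2
    · exact (hlt j i h (Or.inl hj.1)).symm
  have hZO : Z ⊆ O1 ∪ O2 := by
    intro x hx
    have hex : ∃ j, x ∈ U j ∧ (Disjoint (U j ∩ Z) E' ∨ Disjoint (U j ∩ Z) F') := by
      have key : ∀ G : Set X, IsClosed G → x ∉ G → ∃ j, x ∈ U j ∧ Disjoint (U j ∩ Z) G := by
        intro G hG hxG
        obtain ⟨j, hj, hj'⟩ := hb x hx Gᶜ hG.isOpen_compl hxG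
        refine ⟨j, hj, Set.disjoint_left.2 fun y hy hyG => ?_⟩
        exact Set.disjoint_left.1 (hUW j).2.2.1 hy.1 (hj' ⟨hy.2, fun h => h hyG⟩)
      by_cases hxE : x ∈ E'
      · obtain ⟨j, h1, h2⟩ := key F' hF' (Set.disjoint_left.1 hd' hxE)
        exact ⟨j, h1, Or.inr h2⟩
      · obtain ⟨j, h1, h2⟩ := key E' hE' hxE
        exact ⟨j, h1, Or.inl h2⟩
    have hxO : x ∈ O (Nat.find hex) := by
      refine ⟨(Nat.find_spec hex).1, mem_iInter₂.2 fun i hi => ?_⟩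
      split_ifs with hi'
      · have := Nat.find_min hex (Finset.mem_range.1 hi)
        exact (hcov i hx).resolve_left fun h => this ⟨h, hi'⟩
      · exact mem_univ _
    by_cases hF1 : Disjoint (U (Nat.find hex) ∩ Z) F'
    · exact Or.inl (mem_biUnion (show Nat.find hex ∈ J1 from hF1) hxO)
    · exact Or.inr (mem_biUnion (show Nat.find hex ∈ J2 from
        ⟨(Nat.find_spec hex).2.resolve_right hF1, hF1⟩) hxO)
  have hO1F : ∀ x ∈ Z ∩ O1, x ∉ F' := by
    rintro x ⟨hxZ, hx⟩ hxF
    obtain ⟨j, hj, hxj⟩ := mem_iUnion₂.1 hx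
    exact Set.disjoint_left.1 hj ⟨hxj.1, hxZ⟩ hxF
  have hO2E : ∀ x ∈ Z ∩ O2, x ∉ E' := by
    rintro x ⟨hxZ, hx⟩ hxE
    obtain ⟨j, hj, hxj⟩ := mem_iUnion₂.1 hx
    exact Set.disjoint_left.1 hj.1 ⟨hxj.1, hxZ⟩ hxE
  have h1 : Disjoint (closure (E ∪ (Z ∩ O1))) (F ∪ (Z ∩ O2)) := by
    rw [closure_union, hE.closure_eq, Set.disjoint_left]
    rintro x (hx | hx) (hx' | hx')
    · exact Set.disjoint_left.1 hEF hx hx'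
    · exact hO2E x hx' (interior_subset (hEE hx))
    · obtain ⟨z, hz, hz'⟩ := mem_closure_iff.1 hx _ isOpen_interior (hFF hx')
      exact hO1F z hz' (interior_subset hz)
    · obtain ⟨z, hz, hz'⟩ := mem_closure_iff.1 hx _ hO2 hx'.2
      exact Set.disjoint_left.1 hO12 hz'.2 hz
  have h2 : Disjoint (E ∪ (Z ∩ O1)) (closure (F ∪ (Z ∩ O2))) := by
    rw [closure_union, hF.closure_eq, Set.disjoint_left]
    rintro x (hx | hx) (hx' | hx')
    · exact Set.disjoint_left.1 hEF hx hx'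
    · obtain ⟨z, hz, hz'⟩ := mem_closure_iff.1 hx' _ isOpen_interior (hEE hx)
      exact hO2E z hz' (interior_subset hz)
    · exact hO1F x hx (interior_subset (hFF hx'))
    · obtain ⟨z, hz, hz'⟩ := mem_closure_iff.1 hx' _ hO1 hx.2
      exact Set.disjoint_left.1 hO12 hz hz'.2
  obtain ⟨U', W', hU', hW', hUU, hWW, hd⟩ :=
    separatedNhds_iff_disjoint.2 (CompletelyNormalSpace.completely_normal h1 h2)
  refine ⟨U', W', hU', hW', hd, subset_union_left.trans hUU, subset_union_left.trans hWW, ?_⟩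
  intro x hx
  rcases hZO hx with h | h
  · exact Or.inl (hUU (Or.inr ⟨hx, h⟩))
  · exact Or.inr (hWW (Or.inr ⟨hx, h⟩))

theorem RelInd.union {X : Type u} [TopologicalSpace X] [T5Space X]
    [SecondCountableTopology X] {Y Z : Set X} {n : ℕ} (hY : RelInd n Y) (hZ : RelInd 1 Z) :
    RelInd (n+1) (Y ∪ Z) := by
  intro p _ V hV hpV
  obtain ⟨U, W, hU, hW, hd, hE, hF, hZ'⟩ := hZ.separate (E := {p}) (F := Vᶜ)
    isClosed_singleton hV.isClosed_compl (by simpa using hpV)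
  refine ⟨U, W, hU, hW, hd, hE rfl, fun x hx => hF hx.2, hY.mono ?_⟩
  rintro x ⟨h | h, hx⟩
  · exact h
  · exact absurd (hZ' h) hx

theorem relInd_one_univ {X : Type u} [TopologicalSpace X] [T5Space X]
    [SecondCountableTopology X] (C : ℕ → Set X) (hC : ∀ i, IsClosed (C i))
    (hcov : ⋃ i, C i = univ) (h : ∀ i, RelInd 1 (C i)) : RelInd 1 (univ : Set X) := by
  intro p _ V hV hpV
  let T := {u : Set X × Set X // IsClosed u.1 ∧ IsClosed u.2 ∧ Disjoint u.1 u.2}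
  have step : ∀ (i : ℕ) (u : T), ∃ v : T, u.1.1 ⊆ interior v.1.1 ∧ u.1.2 ⊆ interior v.1.2 ∧
      C i ⊆ interior v.1.1 ∪ interior v.1.2 := by
    rintro i ⟨⟨E, F⟩, hE, hF, hEF⟩
    obtain ⟨U, W, hU, hW, hd, hEU, hFW, hZ⟩ := (h i).separate hE hF hEF
    have hdd : Disjoint (E ∪ (C i \ W)) (F ∪ (C i \ U)) := by
      rw [Set.disjoint_left]
      rintro x (hx | hx) (hx' | hx')
      · exact Set.disjoint_left.1 hEF hx hx'
      · exact hx'.2 (hEU hx)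
      · exact hx.2 (hFW hx')
      · exact (hZ hx.1).elim hx'.2 hx.2
    obtain ⟨E', F', hE', hF', hd', hEE, hFF⟩ := exists_closed_nhd_disjoint
      (hE.union ((hC i).sdiff hW)) (hF.union ((hC i).sdiff hU)) hdd
    refine ⟨⟨(E', F'), hE', hF', hd'⟩, subset_union_left.trans hEE,
      subset_union_left.trans hFF, ?_⟩
    intro x hx
    by_cases hxW : x ∈ W
    · exact Or.inr (hFF (Or.inr ⟨hx, Set.disjoint_right.1 hd hxW⟩))
    · exact Or.inl (hEE (Or.inr ⟨hx, hxW⟩))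
  choose f hf1 hf2 hf3 using step
  let u0 : T := ⟨({p}, Vᶜ), isClosed_singleton, hV.isClosed_compl, by simpa using hpV⟩
  let s : ℕ → T := fun k => Nat.rec u0 (fun i u => f i u) k
  have hs : ∀ k, s (k+1) = f k (s k) := fun k => rfl
  have hm1 : Monotone fun k => (s k).1.1 := monotone_nat_of_le_succ fun k =>
    (hf1 k (s k)).trans interior_subset
  have hm2 : Monotone fun k => (s k).1.2 := monotone_nat_of_le_succ fun k =>
    (hf2 k (s k)).trans interior_subset
  refine ⟨⋃ k, interior (s k).1.1, ⋃ k, interior (s k).1.2,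
    isOpen_iUnion fun _ => isOpen_interior, isOpen_iUnion fun _ => isOpen_interior, ?_, ?_, ?_, ?_⟩
  · simp only [Set.disjoint_iUnion_left, Set.disjoint_iUnion_right]
    intro j i
    refine (s (max i j)).2.2.2.mono ?_ ?_
    · exact interior_subset.trans (hm1 (le_max_left _ _))
    · exact interior_subset.trans (hm2 (le_max_right _ _))
  · exact mem_iUnion.2 ⟨1, hf1 0 u0 rfl⟩
  · intro x hx
    exact mem_iUnion.2 ⟨1, hf2 0 u0 hx.2⟩
  · show _ = _
    rw [sdiff_eq_empty]
    intro x hx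
    rw [← hcov] at hx
    obtain ⟨i, hi⟩ := mem_iUnion.1 hx
    rcases hf3 i (s i) hi with h | h
    · exact Or.inl (mem_iUnion.2 ⟨i+1, h⟩)
    · exact Or.inr (mem_iUnion.2 ⟨i+1, h⟩)

theorem relInd_one_sum {X : Type u} [TopologicalSpace X] [T5Space X]
    [SecondCountableTopology X] (A : Set X) (C : ℕ → Set X) (hC : ∀ i, IsClosed (C i))
    (hcov : A ⊆ ⋃ i, C i) (h : ∀ i, RelInd 1 (A ∩ C i)) : RelInd 1 A := by
  have key : RelInd 1 (univ : Set A) := by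
    refine relInd_one_univ (fun i => Subtype.val ⁻¹' (C i))
      (fun i => (hC i).preimage continuous_subtype_val) ?_ ?_
    · rw [← preimage_iUnion]
      exact eq_univ_of_forall fun x => hcov x.2
    · intro i
      exact ((h i).preimage IsInducing.subtypeVal).mono fun x hx => ⟨x.2, hx⟩
  have h2 : IndLt 1 A := indLt_of_relInd IsEmbedding.id (by simpa using key)
  simpa using relInd_of_indLt (X := X) (f := Subtype.val) IsEmbedding.subtypeVal h2

theorem relInd_sum {X : Type u} [TopologicalSpace X] [T5Space X]
    [SecondCountableTopology X] (n : ℕ) : ∀ (A : Set X) (C : ℕ → Set X),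
    (∀ i, IsClosed (C i)) → A ⊆ ⋃ i, C i → (∀ i, RelInd n (A ∩ C i)) → RelInd n A := by
  induction n with
  | zero =>
    intro A C hC hcov h
    show A = ∅
    refine eq_empty_of_forall_notMem fun x hx => ?_
    obtain ⟨i, hi⟩ := mem_iUnion.1 (hcov hx)
    have : A ∩ C i = ∅ := h i
    exact notMem_empty x (this ▸ ⟨hx, hi⟩)
  | succ n ih =>
    intro A C hC hcov h
    choose U W hUW hb using fun i => (h i).family
    let G : ℕ × ℕ → Set X := fun k => C k.1 \ (U k.1 k.2 ∪ W k.1 k.2)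
    let Y : Set X := A ∩ ⋃ k, G k
    have hG : ∀ k, IsClosed (G k) := fun k =>
      (hC k.1).sdiff ((hUW k.1 k.2).1.union (hUW k.1 k.2).2.1)
    have hY : RelInd n Y := by
      refine ih Y (fun m => G (Nat.unpair m)) (fun m => hG _) ?_ ?_
      · rintro x ⟨_, hx⟩
        obtain ⟨k, hk⟩ := mem_iUnion.1 hx
        exact mem_iUnion.2 ⟨Nat.pair k.1 k.2, by simpa using hk⟩
      · intro m
        refine (hUW (Nat.unpair m).1 (Nat.unpair m).2).2.2.2.mono ?_
        rintro x ⟨hx, hx'⟩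
        exact ⟨⟨hx.1, hx'.1⟩, hx'.2⟩
    have hZ : RelInd 1 (A \ Y) := by
      refine relInd_one_sum _ C hC (sdiff_subset.trans hcov) ?_
      intro i p hp V hV hpV
      obtain ⟨j, hj, hj'⟩ := hb i p ⟨hp.1.1, hp.2⟩ V hV hpV
      refine ⟨U i j, W i j, (hUW i j).1, (hUW i j).2.1, (hUW i j).2.2.1, hj, ?_, ?_⟩
      · exact fun x hx => hj' ⟨⟨hx.1.1.1, hx.1.2⟩, hx.2⟩
      · show _ = _
        refine eq_empty_of_forall_notMem fun x hx => ?_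
        exact hx.1.1.2 ⟨hx.1.1.1, mem_iUnion.2 ⟨(i, j), hx.1.2, hx.2⟩⟩
    exact (hY.union hZ).mono fun x hx => by
      by_cases hxY : x ∈ Y
      · exact Or.inl hxY
      · exact Or.inr ⟨hx, hxY⟩

theorem relInd_sum_finset {X : Type u} [TopologicalSpace X] [T5Space X]
    [SecondCountableTopology X] (n : ℕ) {ι : Type*} (t : Finset ι) (A : Set X) (C : ι → Set X)
    (hC : ∀ i, IsClosed (C i)) (hA : A ⊆ ⋃ i ∈ t, C i) (h : ∀ i, RelInd n (C i)) :
    RelInd n A := by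
  rcases isEmpty_or_nonempty t with ht | ht
  · refine (RelInd.empty n).mono fun x hx => ?_
    obtain ⟨i, hi, _⟩ := mem_iUnion₂.1 (hA hx)
    exact ht.elim ⟨i, hi⟩
  · obtain ⟨e, he⟩ := exists_surjective_nat t
    refine relInd_sum n A (fun m => C (e m)) (fun _ => hC _) ?_
      (fun m => (h _).mono inter_subset_right)
    intro x hx
    obtain ⟨i, hi, hx⟩ := mem_iUnion₂.1 (hA hx)
    obtain ⟨m, hm⟩ := he ⟨i, hi⟩
    exact mem_iUnion.2 ⟨m, by rw [hm]; exact hx⟩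

/-- If `X` is a locally compact metric space in which all sufficiently small spheres
`∂B(x,ε)` are compact, and every pair of distinct points of `X` is separated by a
closed set of `ind ≤ D - 1`, then `ind X ≤ D` (finitely many separators suffice to
separate a point from a small compact sphere, and the resulting neighborhood has
frontier contained in their union). -/
theorem ind_le_of_separators_locallyCompact {X : Type u} [MetricSpace X]
    [LocallyCompactSpace X] (D : ℕ)
    (hsph : ∀ x : X, ∃ ε₀ > (0 : ℝ), ∀ ε : ℝ, 0 < ε → ε < ε₀ →
      IsCompact (Metric.sphere x ε))
    (hsep : ∀ x y : X, x ≠ y →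
      ∃ L : Set X, SeparatesPoints L x y ∧ IndLt D ↥L) :
    IndLt (D + 1) X := by
  intro p V hV hpV
  obtain ⟨r, hr, hrK, hrV⟩ : ∃ r > 0, IsCompact (Metric.closedBall p r) ∧
      Metric.closedBall p r ⊆ V := by
    obtain ⟨K, hK, hKV, hKc⟩ := local_compact_nhds (hV.mem_nhds hpV)
    obtain ⟨r, hr, hrK⟩ := Metric.nhds_basis_closedBall.mem_iff.1 hK
    exact ⟨r, hr, hKc.of_isClosed_subset Metric.isClosed_closedBall hrK, hrK.trans hKV⟩
  have hS : IsCompact (Metric.sphere p r) :=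
    hrK.of_isClosed_subset Metric.isClosed_sphere Metric.sphere_subset_closedBall
  have hne : ∀ y : Metric.sphere p r, p ≠ y := by
    rintro ⟨y, hy⟩ rfl
    simp at hy
    exact hr.ne hy
  choose L hL hLD using fun y : Metric.sphere p r => hsep p y (hne y)
  choose hLc W V' hW hV' hpW hyV hWV hun using hL
  obtain ⟨t, ht⟩ := hS.elim_finite_subcover V' hV' fun y hy => mem_iUnion.2 ⟨⟨y, hy⟩, hyV _⟩
  have hop : IsOpen ((⋂ i ∈ t, W i) ∩ Metric.ball p r) :=
    (isOpen_biInter_finset fun i _ => hW i).inter Metric.isOpen_ball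
  have hfK : frontier ((⋂ i ∈ t, W i) ∩ Metric.ball p r) ⊆ Metric.closedBall p r :=
    frontier_subset_closure.trans
      ((closure_mono inter_subset_right).trans Metric.closure_ball_subset_closedBall)
  have hfL : frontier ((⋂ i ∈ t, W i) ∩ Metric.ball p r) ⊆ ⋃ i ∈ t, L i := by
    intro x hx
    have hxK := hfK hx
    by_contra hxL
    rw [hop.frontier_eq] at hx
    have hxV : ∀ i ∈ t, x ∉ V' i := by
      intro i hi hxi
      obtain ⟨z, hz, hz'⟩ := mem_closure_iff.1 hx.1 _ (hV' i) hxi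
      have : z ∈ W i ∩ V' i := ⟨mem_iInter₂.1 hz'.1 i hi, hz⟩
      rw [hWV] at this
      exact this
    have hxW : ∀ i ∈ t, x ∈ W i := by
      intro i hi
      have : x ∈ W i ∪ V' i := by
        rw [hun]
        exact fun h => hxL (mem_biUnion hi h)
      exact this.resolve_right (hxV i hi)
    have hxS : x ∈ Metric.sphere p r := by
      refine le_antisymm hxK (not_lt.1 fun h => hx.2 ⟨mem_iInter₂.2 hxW, h⟩)
    obtain ⟨i, hi, hxi⟩ := mem_iUnion₂.1 (ht hxS)
    exact hxV i hi hxi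
  refine ⟨_, hop, ⟨mem_iInter₂.2 fun i _ => hpW i, Metric.mem_ball_self hr⟩,
    inter_subset_right.trans (Metric.ball_subset_closedBall.trans hrV), ?_⟩
  have : CompactSpace (Metric.closedBall p r) := isCompact_iff_compactSpace.1 hrK
  refine indLt_of_relInd (X := Metric.closedBall p r) (f := Set.inclusion hfK)
    (IsEmbedding.inclusion hfK) ?_
  refine relInd_sum_finset D t _ (fun i => Subtype.val ⁻¹' L i)
    (fun i => (hLc i).preimage continuous_subtype_val) ?_ ?_
  · rintro _ ⟨x, rfl⟩
    obtain ⟨i, hi, hxi⟩ := mem_iUnion₂.1 (hfL x.2)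
    exact mem_iUnion₂.2 ⟨i, hi, hxi⟩
  · intro i
    have := relInd_of_indLt (X := X) (f := (Subtype.val : L i → X)) IsEmbedding.subtypeVal (hLD i)
    rw [Subtype.range_coe] at this
    exact this.preimage IsInducing.subtypeVal
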